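/- For every δ > 0, ω > 0 and t₀ ∈ ℝ, the function t ↦ sin(ω(t + t₀))·x_h'(t) is integrable on ℝ and ∫_{−∞}^{∞} sin(ω(t + t₀))·x_h'(t) dt = (6πω²/δ)·cos(ω t₀)/sinh(πω/√δ). -/

import Mathlib

open MeasureTheory

/-! With `σ` the logistic sigmoid, `1 / (1 + cosh u) = 2 σ'(u)`, so the homoclinic orbit is an
affine function of the logistic density `σ' = σ (1 - σ)` in the variable `u = √δ t`. Integrating by
parts moves the derivative onto the sine, and the substitution `y = σ u`, under which `e ^ (z u)`
becomes `(y / (1 - y)) ^ z`, turns the resulting Fourier integral into the Beta integral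
`B(1 + z, 1 - z) = π z / sin (π z)` at imaginary `z`; Euler's reflection formula replaces the
residue calculus. -/

section

open Real

/-- The probability density `σ (1 - σ)` of the standard logistic distribution, whose cumulative
distribution function is `Real.sigmoid`. It carries the `sech²` profile of the homoclinic orbit,
and is written through `Real.sigmoid` to suit the substitution `y = σ u`. -/
noncomputable def logisticDensity (u : ℝ) : ℝ := sigmoid u * (1 - sigmoid u)

namespace logisticDensity

lemma eq_one_div (u : ℝ) : logisticDensity u = 1 / (2 * (1 + cosh u)) := by
  rw [logisticDensity, sigmoid_def, cosh_eq, exp_neg]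
  field

protected lemma hasDerivAt (u : ℝ) :
    HasDerivAt logisticDensity ((1 - 2 * sigmoid u) * logisticDensity u) u := by
  have hσ := hasDerivAt_sigmoid u
  refine (hσ.mul (hσ.const_sub 1)).congr_deriv ?_
  rw [logisticDensity]
  ring

protected lemma differentiable : Differentiable ℝ logisticDensity :=
  fun u => (logisticDensity.hasDerivAt u).differentiableAt

section ChangeOfVariables

variable {E : Type*} [NormedAddCommGroup E] [NormedSpace ℝ E] (f : ℝ → E)

lemma integrable_smul_comp_sigmoid_iff :
    Integrable (fun u => logisticDensity u • f (sigmoid u)) ↔ IntegrableOn f (Set.Ioo 0 1) := by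
  rw [← range_sigmoid, ← Set.image_univ,
    integrableOn_image_iff_integrableOn_deriv_smul_of_monotoneOn MeasurableSet.univ
      (fun u _ => (hasDerivAt_sigmoid u).hasDerivWithinAt) (sigmoid_monotone.monotoneOn _),
    integrableOn_univ]
  rfl

lemma integral_smul_comp_sigmoid :
    ∫ u, logisticDensity u • f (sigmoid u) = ∫ y in Set.Ioo 0 1, f y := by
  rw [← range_sigmoid, ← Set.image_univ,
    integral_image_eq_integral_deriv_smul_of_monotoneOn MeasurableSet.univ
      (fun u _ => (hasDerivAt_sigmoid u).hasDerivWithinAt) (sigmoid_monotone.monotoneOn _),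
    setIntegral_univ]
  rfl

end ChangeOfVariables

protected lemma integrable : Integrable logisticDensity := by
  simpa only [smul_eq_mul, mul_one] using
    (integrable_smul_comp_sigmoid_iff fun _ => (1 : ℝ)).2 (integrableOn_const (by simp))

lemma integrable_deriv : Integrable (deriv logisticDensity) := by
  rw [funext fun u => (logisticDensity.hasDerivAt u).deriv]
  refine logisticDensity.integrable.bdd_mul (c := 1)
    (Continuous.aestronglyMeasurable (by fun_prop)) (.of_forall fun u => abs_le.2 ?_)
  constructor <;> linarith [sigmoid_nonneg u, sigmoid_le_one u]

end logisticDensity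

lemma betaIntegral_one_add_one_sub {z : ℂ} (hz : z ≠ 0) (hre : |z.re| < 1) :
    Complex.betaIntegral (1 + z) (1 - z) = π * z / Complex.sin (π * z) := by
  obtain ⟨hneg, hpos⟩ := abs_lt.1 hre
  calc Complex.betaIntegral (1 + z) (1 - z)
      = Complex.Gamma (1 + z) * Complex.Gamma (1 - z) / Complex.Gamma (1 + z + (1 - z)) :=
        Complex.betaIntegral_eq_Gamma_mul_div _ _
          (by rw [Complex.add_re, Complex.one_re]; linarith)
          (by rw [Complex.sub_re, Complex.one_re]; linarith)
    _ = z * (Complex.Gamma z * Complex.Gamma (1 - z)) := by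
        rw [show 1 + z + (1 - z) = 1 + 1 by ring, Complex.Gamma_add_one 1 one_ne_zero,
          Complex.Gamma_one, add_comm 1 z, Complex.Gamma_add_one z hz]
        ring
    _ = π * z / Complex.sin (π * z) := by
        rw [Complex.Gamma_mul_Gamma_one_sub]
        ring

lemma sigmoid_cpow_mul_one_sub_sigmoid_cpow_neg (u : ℝ) (z : ℂ) :
    (sigmoid u : ℂ) ^ z * (1 - sigmoid u : ℂ) ^ (-z) = Complex.exp (z * u) := by
  have hpos : 0 < 1 - sigmoid u := sub_pos.2 (sigmoid_lt_one u)
  have hodds : sigmoid u = (1 - sigmoid u) * exp u := by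
    simpa only [neg_neg, sigmoid_neg] using (sigmoid_mul_rexp_neg (-u)).symm
  have hexp : (exp u : ℂ) ^ z = Complex.exp (z * u) := by
    rw [Complex.cpow_def_of_ne_zero (by exact_mod_cast (exp_pos u).ne'),
      ← Complex.ofReal_log (exp_pos u).le, log_exp, mul_comm]
  have hne : ((1 - sigmoid u : ℝ) : ℂ) ^ z ≠ 0 := by
    simp [Complex.cpow_eq_zero_iff, -Complex.ofReal_sub, hpos.ne']
  calc (sigmoid u : ℂ) ^ z * (1 - sigmoid u : ℂ) ^ (-z)
      = (((1 - sigmoid u : ℝ) : ℂ) * (exp u : ℝ)) ^ z * ((1 - sigmoid u : ℝ) : ℂ) ^ (-z) := by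
        rw [← Complex.ofReal_mul, ← hodds, Complex.ofReal_sub, Complex.ofReal_one]
    _ = Complex.exp (z * u) := by
        rw [Complex.mul_cpow_ofReal_nonneg hpos.le (exp_pos u).le, hexp, Complex.cpow_neg]
        field

lemma integral_cexp_mul_logisticDensity {z : ℂ} (hz : z ≠ 0) (hre : |z.re| < 1) :
    ∫ u : ℝ, Complex.exp (z * u) * logisticDensity u = π * z / Complex.sin (π * z) := by
  rw [← betaIntegral_one_add_one_sub hz hre, Complex.betaIntegral,
    intervalIntegral.integral_of_le zero_le_one, integral_Ioc_eq_integral_Ioo,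
    ← logisticDensity.integral_smul_comp_sigmoid]
  congr with u
  rw [add_sub_cancel_left, sub_sub_cancel_left, sigmoid_cpow_mul_one_sub_sigmoid_cpow_neg,
    Complex.real_smul, mul_comm]

lemma integral_cexp_mul_I_mul_logisticDensity {k : ℝ} (hk : k ≠ 0) :
    ∫ u : ℝ, Complex.exp ((k * u : ℝ) * Complex.I) * logisticDensity u =
      (π * k / sinh (π * k) : ℝ) := by
  have hlaplace := integral_cexp_mul_logisticDensity (z := k * Complex.I) (by simp [hk]) (by simp)
  calc ∫ u : ℝ, Complex.exp ((k * u : ℝ) * Complex.I) * logisticDensity u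
      = ∫ u : ℝ, Complex.exp (k * Complex.I * u) * logisticDensity u := by
        simp only [Complex.ofReal_mul, mul_right_comm]
    _ = (π * k / sinh (π * k) : ℝ) := by
        rw [hlaplace, ← mul_assoc, Complex.sin_mul_I, mul_div_mul_right _ _ Complex.I_ne_zero]
        push_cast
        rfl

lemma integral_cos_mul_logisticDensity {k : ℝ} (hk : k ≠ 0) (θ : ℝ) :
    ∫ u, cos (k * u + θ) * logisticDensity u = cos θ * (π * k / sinh (π * k)) := by
  let F : ℝ → ℂ := fun u => Complex.exp ((k * u + θ : ℝ) * Complex.I) * logisticDensity u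
  have hF : Integrable F :=
    logisticDensity.integrable.ofReal.bdd_mul (c := 1)
      (Continuous.aestronglyMeasurable (by fun_prop))
      (.of_forall fun u => (Complex.norm_exp_ofReal_mul_I _).le)
  have hFint : ∫ u, F u = Complex.exp (θ * Complex.I) * (π * k / sinh (π * k) : ℝ) := by
    rw [← integral_cexp_mul_I_mul_logisticDensity hk, ← integral_const_mul]
    congr with u
    rw [← mul_assoc, ← Complex.exp_add, ← add_mul, ← Complex.ofReal_add, add_comm θ]
  calc ∫ u, cos (k * u + θ) * logisticDensity u
      = ∫ u, (F u).re := by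
        simp only [F, Complex.re_mul_ofReal, Complex.exp_ofReal_mul_I_re]
    _ = (∫ u, F u).re := integral_re hF
    _ = cos θ * (π * k / sinh (π * k)) := by
        rw [hFint, Complex.re_mul_ofReal, Complex.exp_ofReal_mul_I_re]

lemma integrable_sin_mul {f : ℝ → ℝ} (hf : Integrable f) (k θ : ℝ) :
    Integrable fun u => sin (k * u + θ) * f u :=
  hf.bdd_mul (c := 1) (Continuous.aestronglyMeasurable (by fun_prop))
    (.of_forall fun _ => abs_sin_le_one _)

lemma integrable_cos_mul {f : ℝ → ℝ} (hf : Integrable f) (k θ : ℝ) :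
    Integrable fun u => cos (k * u + θ) * f u :=
  hf.bdd_mul (c := 1) (Continuous.aestronglyMeasurable (by fun_prop))
    (.of_forall fun _ => abs_cos_le_one _)

lemma integral_sin_mul_deriv {f : ℝ → ℝ} (hf : Differentiable ℝ f) (hfi : Integrable f)
    (hfi' : Integrable (deriv f)) (k θ : ℝ) :
    ∫ u, sin (k * u + θ) * deriv f u = -k * ∫ u, cos (k * u + θ) * f u := by
  have hsin (u : ℝ) : HasDerivAt (fun u => sin (k * u + θ)) (k * cos (k * u + θ)) u := by
    simpa [mul_comm] using (((hasDerivAt_id u).const_mul k).add_const θ).sin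
  have hcos : Integrable fun u => k * cos (k * u + θ) * f u := by
    simpa only [mul_assoc] using (integrable_cos_mul hfi k θ).const_mul k
  rw [integral_mul_deriv_eq_deriv_mul_of_integrable (fun u _ => hsin u)
    (fun u _ => (hf u).hasDerivAt) (integrable_sin_mul hfi' k θ) hcos (integrable_sin_mul hfi k θ)]
  simp only [mul_assoc, integral_const_mul, neg_mul]

lemma integral_sin_mul_deriv_logisticDensity {k : ℝ} (hk : k ≠ 0) (θ : ℝ) :
    ∫ u, sin (k * u + θ) * deriv logisticDensity u = -(π * k ^ 2) * (cos θ / sinh (π * k)) := by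
  rw [integral_sin_mul_deriv logisticDensity.differentiable logisticDensity.integrable
    logisticDensity.integrable_deriv, integral_cos_mul_logisticDensity hk]
  ring

theorem helmholtz_forcing_integral_general {a ω : ℝ} (ha : 0 < a) (hω : ω ≠ 0) (t₀ b c : ℝ)
    {x : ℝ → ℝ} (hx : ∀ t, x t = b + c / (1 + cosh (a * t))) :
    Integrable (fun t => sin (ω * (t + t₀)) * deriv x t) ∧
    ∫ t, sin (ω * (t + t₀)) * deriv x t =
      -(2 * π * c * ω ^ 2 / a ^ 2) * (cos (ω * t₀) / sinh (π * ω / a)) := by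
  let g : ℝ → ℝ := fun u => sin (ω / a * u + ω * t₀) * deriv logisticDensity u
  have hxp : x = fun t => b + 2 * c * logisticDensity (a * t) := by
    ext t
    rw [hx, logisticDensity.eq_one_div]
    field
  have hderiv (t : ℝ) : deriv x t = 2 * c * (a * deriv logisticDensity (a * t)) := by
    rw [hxp, deriv_const_add, deriv_const_mul_field, deriv_comp_mul_left, smul_eq_mul]
  have hrescale : (fun t => sin (ω * (t + t₀)) * deriv x t) = fun t => 2 * c * a * g (a * t) := by
    ext t
    rw [hderiv, show ω * (t + t₀) = ω / a * (a * t) + ω * t₀ by field_simp]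
    ring
  have hg : Integrable g := integrable_sin_mul logisticDensity.integrable_deriv _ _
  rw [hrescale]
  refine ⟨(hg.comp_mul_left' ha.ne').const_mul _, ?_⟩
  rw [integral_const_mul, Measure.integral_comp_mul_left, smul_eq_mul, abs_of_pos (inv_pos.2 ha),
    integral_sin_mul_deriv_logisticDensity (div_ne_zero hω ha.ne'), mul_div_assoc]
  field_simp

end

/-- For every δ > 0, ω > 0 and t₀ ∈ ℝ, `t ↦ sin(ω(t+t₀))·x_h'(t)`
is integrable on ℝ and
`∫ sin(ω(t+t₀))·x_h'(t) dt = (6πω²/δ)·cos(ω t₀)/sinh(πω/√δ)`. -/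
theorem helmholtz_forcing_integral (δ ω : ℝ) (hδ : 0 < δ) (hω : 0 < ω) (t₀ : ℝ)
    (x : ℝ → ℝ)
    (hx : ∀ t : ℝ, x t = 1 - 3 / (1 + Real.cosh (Real.sqrt δ * t))) :
    Integrable (fun t : ℝ => Real.sin (ω * (t + t₀)) * deriv x t) ∧
    ∫ t : ℝ, Real.sin (ω * (t + t₀)) * deriv x t =
      (6 * Real.pi * ω ^ 2 / δ) * (Real.cos (ω * t₀) / Real.sinh (Real.pi * ω / Real.sqrt δ)) := by
  convert helmholtz_forcing_integral_general (Real.sqrt_pos.2 hδ) hω.ne' t₀ 1 (-3)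
    (x := x) (fun t => by rw [hx]; ring) using 3
  rw [Real.sq_sqrt hδ.le]
  ring
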